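/- Let Q be a finite simple graph with n vertices and m edges. Then the first Zagreb index of the transformation graph Q_{rs}^{+−−} (the case p = r, q = 0 of Q_{rs}^{x(p) y(q) −}) equals (r(1−s)² − 2s(m+r(n−2)+1))·M1(Q) + 2s·M2(Q) + s·F(Q) + nrm²s² + 4rsm²(1−s) + sm(m+r(n−2)+1)². -/

import Mathlib

/-!
The neighbours of a vertex copy of `a` are the `d(a)` neighbours in its own copy of `Q` and the
`m - d(a)` edges avoiding `a` in each edge copy. An edge copy of `e = uv` sees the `n - 2` vertices
off `e` in each vertex copy and, by inclusion-exclusion on the stars at `u` and `v`, which share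
only `e`, the `m + 1 - d(u) - d(v)` edges disjoint from `e` in its own copy. Squaring and summing
the degrees leaves edge sums of `d(u) + d(v)` and `(d(u) + d(v))²`, and double counting incidences
turns `∑_{uv ∈ E} (f(u) + f(v))` into `∑_v d(v) f(v)`.
-/

/-- Classical `Fintype` instance for neighbor sets of graphs on finite types. -/
noncomputable instance fintypeNeighborSetOfFinite {W : Type*} [Finite W]
    (G : SimpleGraph W) (v : W) : Fintype (G.neighborSet v) :=
  Fintype.ofFinite _

/-- Classical `Fintype` instance for the edge set of a graph on a finite type. -/
noncomputable instance fintypeEdgeSetOfFinite {W : Type*} [Finite W]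
    (G : SimpleGraph W) : Fintype G.edgeSet :=
  Fintype.ofFinite _

/-- The first Zagreb index `M₁(G) = Σ_v d(v)²`. -/
noncomputable def zagrebM1 {W : Type*} [Fintype W] (G : SimpleGraph W) : ℕ :=
  ∑ v, G.degree v ^ 2

/-- The second Zagreb index `M₂(G) = Σ_{uv ∈ E(G)} d(u)·d(v)`. -/
noncomputable def zagrebM2 {W : Type*} [Fintype W] (G : SimpleGraph W) : ℕ :=
  ∑ e ∈ G.edgeFinset,
    Sym2.lift ⟨fun u v => G.degree u * G.degree v, fun u v => Nat.mul_comm (G.degree u) (G.degree v)⟩ e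

/-- The forgotten index `F(G) = Σ_v d(v)³`. -/
noncomputable def forgottenF {W : Type*} [Fintype W] (G : SimpleGraph W) : ℕ :=
  ∑ v, G.degree v ^ 3

/-- The `(r,s)`-generalised transformation graph `Q_{rs}^{x(p) y(q) -}`.
Its vertices are `r` copies of `V(Q)` (indexed by `Fin r`) together with `s`
copies of `E(Q)` (indexed by `Fin s`).  The copy `V_g` carries the adjacency of
`Q` when `g < p` and that of the complement when `g ≥ p`; the copy `E_h`
carries line-graph adjacency (sharing an endpoint) when `h < q` and its
complement when `h ≥ q`; a vertex-copy vertex and an edge-copy vertex are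
adjacent iff the vertex is NOT incident with the edge in `Q`. -/
def genTransMinus {V : Type*} (Q : SimpleGraph V) (r s p q : ℕ) :
    SimpleGraph ((Fin r × V) ⊕ (Fin s × Q.edgeSet)) :=
  SimpleGraph.fromRel (fun a b =>
    match a, b with
    | Sum.inl (g, α), Sum.inl (g', β) =>
        g = g' ∧ (((g : ℕ) < p ∧ Q.Adj α β) ∨ (¬ (g : ℕ) < p ∧ ¬ Q.Adj α β))
    | Sum.inr (h, e), Sum.inr (h', f) =>
        h = h' ∧ (((h : ℕ) < q ∧ ∃ w, w ∈ (e : Sym2 V) ∧ w ∈ (f : Sym2 V)) ∨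
                  (¬ (h : ℕ) < q ∧ ¬ ∃ w, w ∈ (e : Sym2 V) ∧ w ∈ (f : Sym2 V)))
    | Sum.inl (_, α), Sum.inr (_, e) => α ∉ (e : Sym2 V)
    | Sum.inr (_, e), Sum.inl (_, α) => α ∉ (e : Sym2 V))

open Finset

section Incidence

variable {V : Type*} (G : SimpleGraph V) [Fintype G.edgeSet]

theorem card_filter_edgeSet_eq_card_filter_edgeFinset (p : Sym2 V → Prop) [DecidablePred p] :
    #{e : G.edgeSet | p e} = #{e ∈ G.edgeFinset | p e} := by
  simp only [card_filter]
  exact sum_set_coe (f := fun e => if p e then 1 else 0) G.edgeSet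

theorem card_filter_notMem_add_degree [DecidableEq V] (v : V) [Fintype (G.neighborSet v)] :
    #{e ∈ G.edgeFinset | v ∉ e} + G.degree v = #G.edgeFinset := by
  rw [← G.card_incidenceFinset_eq_degree, G.incidenceFinset_eq_filter, add_comm,
    card_filter_add_card_filter_not]

theorem card_filter_notMem_and_notMem_add_degree_add_degree [DecidableEq V] {u v : V}
    [Fintype (G.neighborSet u)] [Fintype (G.neighborSet v)] (huv : G.Adj u v) :
    #{e ∈ G.edgeFinset | u ∉ e ∧ v ∉ e} + (G.degree u + G.degree v) = #G.edgeFinset + 1 := by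
  have inter_stars : G.incidenceFinset u ∩ G.incidenceFinset v = {s(u, v)} := by
    rw [← coe_inj]
    push_cast
    exact G.incidenceSet_inter_incidenceSet_of_adj huv
  have union_stars :
      G.incidenceFinset u ∪ G.incidenceFinset v = {e ∈ G.edgeFinset | ¬(u ∉ e ∧ v ∉ e)} := by
    simp only [G.incidenceFinset_eq_filter, ← filter_or, not_and_or, not_not]
  rw [← G.card_incidenceFinset_eq_degree u, ← G.card_incidenceFinset_eq_degree v,
    ← card_union_add_card_inter, inter_stars, union_stars, card_singleton, ← add_assoc,
    card_filter_add_card_filter_not]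

theorem sum_edgeFinset_add_map [Fintype V] [G.LocallyFinite] {M : Type*} [AddCommMonoid M]
    (f : V → M) : ∑ e ∈ G.edgeFinset, (e.map f).add = ∑ v, G.degree v • f v := by
  classical
  have add_map_eq_sum : ∀ e ∈ G.edgeFinset, (e.map f).add = ∑ v with v ∈ e, f v := by
    intro e he
    induction e with
    | _ u v =>
      have huv : G.Adj u v := G.mem_edgeFinset.mp he
      have ends : ({w | w ∈ s(u, v)} : Finset V) = {u, v} := by ext; simp
      rw [ends, sum_pair huv.ne, Sym2.map_mk, Sym2.add_mk]
  calc ∑ e ∈ G.edgeFinset, (e.map f).add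
      = ∑ e ∈ G.edgeFinset, ∑ v with v ∈ e, f v := sum_congr rfl add_map_eq_sum
    _ = ∑ v, ∑ e ∈ G.edgeFinset with v ∈ e, f v := sum_comm' (by simp)
    _ = ∑ v, G.degree v • f v := by
      simp only [sum_const, ← G.incidenceFinset_eq_filter, G.card_incidenceFinset_eq_degree]

end Incidence

section DegreeIndices

/-- The sum `d(u) + d(v)` of the degrees of the endpoints of `e = uv`, in terms of which the degree
of an edge copy is expressed without choosing endpoints. It is defined on all unordered pairs; a
diagonal pair counts its vertex twice. -/
def edgeDegreeSum {V : Type*} (G : SimpleGraph V) [G.LocallyFinite] (e : Sym2 V) : ℕ :=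
  (e.map (G.degree ·)).add

variable {V : Type*} [Fintype V] (G : SimpleGraph V)

/-- The hyper-Zagreb index `HM(G) = Σ_{uv ∈ E(G)} (d(u) + d(v))²`, the quadratic edge sum through
which `F` and `M₂` enter the first Zagreb index of a transformation graph. -/
noncomputable def hyperZagreb : ℕ :=
  ∑ e ∈ G.edgeFinset, edgeDegreeSum G e ^ 2

theorem sum_edgeFinset_edgeDegreeSum :
    ∑ e ∈ G.edgeFinset, edgeDegreeSum G e = zagrebM1 G := by
  simp only [edgeDegreeSum, sum_edgeFinset_add_map, zagrebM1, smul_eq_mul, sq]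

theorem hyperZagreb_eq_forgottenF_add_two_mul_zagrebM2 :
    hyperZagreb G = forgottenF G + 2 * zagrebM2 G := by
  have sq_edgeDegreeSum (e : Sym2 V) : edgeDegreeSum G e ^ 2 =
      (e.map (G.degree · ^ 2)).add + 2 * (e.map (G.degree ·)).mul := by
    induction e with
    | _ u v =>
      simp only [edgeDegreeSum, Sym2.map_mk, Sym2.add_mk, Sym2.mul_mk]
      ring
  have sum_mul_map : ∑ e ∈ G.edgeFinset, (e.map (G.degree ·)).mul = zagrebM2 G :=
    sum_congr rfl fun e _ => by induction e; rfl
  have sum_add_map_sq : ∑ e ∈ G.edgeFinset, (e.map (G.degree · ^ 2)).add = forgottenF G := by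
    simp only [sum_edgeFinset_add_map, forgottenF, smul_eq_mul, ← pow_succ']
  rw [hyperZagreb, sum_congr rfl fun e _ => sq_edgeDegreeSum e, sum_add_distrib, ← mul_sum,
    sum_add_map_sq, sum_mul_map]

theorem sum_sq_add_mul_degree {R : Type*} [CommSemiring R] (a b : R) :
    ∑ v, (a + b * G.degree v) ^ 2 =
      Fintype.card V * a ^ 2 + 4 * a * b * #G.edgeFinset + b ^ 2 * zagrebM1 G := by
  have handshake : ∑ v, G.degree v = 2 * #G.edgeFinset := by
    classical
    convert G.sum_degrees_eq_twice_card_edges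
  have handshake_cast : ∑ v, (G.degree v : R) = 2 * #G.edgeFinset := by
    rw [← Nat.cast_sum, handshake, Nat.cast_mul, Nat.cast_ofNat]
  simp only [add_sq, mul_pow, ← mul_assoc, sum_add_distrib, ← mul_sum, handshake_cast, zagrebM1,
    sum_const, card_univ, nsmul_eq_mul, Nat.cast_sum, Nat.cast_pow]
  ring

theorem sum_edgeFinset_sq_sub_edgeDegreeSum {R : Type*} [CommRing R] (a : R) :
    ∑ e ∈ G.edgeFinset, (a - edgeDegreeSum G e) ^ 2 =
      #G.edgeFinset * a ^ 2 - 2 * a * zagrebM1 G + hyperZagreb G := by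
  simp only [sub_sq, sum_add_distrib, sum_sub_distrib, ← mul_sum, ← sum_edgeFinset_edgeDegreeSum,
    hyperZagreb, sum_const, nsmul_eq_mul, Nat.cast_sum, Nat.cast_pow]

end DegreeIndices

namespace genTransMinus

section Adjacency

variable {V : Type*} (Q : SimpleGraph V) {r s p q : ℕ}

theorem adj_inl_inl_of_lt {g g' : Fin r} {a b : V} (hg : (g : ℕ) < p) :
    (genTransMinus Q r s p q).Adj (.inl (g, a)) (.inl (g', b)) ↔ g = g' ∧ Q.Adj a b := by
  simp only [genTransMinus, SimpleGraph.fromRel_adj, ne_eq, Sum.inl.injEq, Prod.mk.injEq]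
  grind [Q.adj_comm a b, Q.ne_of_adj]

theorem adj_inl_inr {g : Fin r} {a : V} {h : Fin s} {e : Q.edgeSet} :
    (genTransMinus Q r s p q).Adj (.inl (g, a)) (.inr (h, e)) ↔ a ∉ (e : Sym2 V) := by
  simp [genTransMinus]

theorem adj_inr_inr_of_le {h h' : Fin s} {e f : Q.edgeSet} (hq : q ≤ h) :
    (genTransMinus Q r s p q).Adj (.inr (h, e)) (.inr (h', f)) ↔
      h = h' ∧ ∀ w ∈ (e : Sym2 V), w ∉ (f : Sym2 V) := by
  have ne_of_disjoint (hef : ∀ w ∈ (e : Sym2 V), w ∉ (f : Sym2 V)) : e ≠ f := by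
    rintro rfl
    exact hef _ (Sym2.out_fst_mem _) (Sym2.out_fst_mem _)
  simp only [genTransMinus, SimpleGraph.fromRel_adj, ne_eq, Sum.inr.injEq, Prod.mk.injEq]
  grind

end Adjacency

section Degree

variable {V : Type*} (Q : SimpleGraph V) {r s p q : ℕ}

theorem degree_inl_of_lt [Finite V] {g : Fin r} (a : V) (hg : (g : ℕ) < p) :
    ((genTransMinus Q r s p q).degree (.inl (g, a)) : ℤ) =
      s * #Q.edgeFinset + (1 - s) * Q.degree a := by
  classical
  have neighbors : (genTransMinus Q r s p q).neighborFinset (.inl (g, a)) =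
      ({g} ×ˢ Q.neighborFinset a).disjSum
        (univ ×ˢ ({e | a ∉ (e : Sym2 V)} : Finset Q.edgeSet)) := by
    ext (⟨g', b⟩ | ⟨h, e⟩)
    · simp [adj_inl_inl_of_lt Q hg, and_comm]
    · simp [adj_inl_inr]
  have degree_eq : (genTransMinus Q r s p q).degree (.inl (g, a)) =
      Q.degree a + s * #{e ∈ Q.edgeFinset | a ∉ e} := by
    rw [← SimpleGraph.card_neighborFinset_eq_degree, neighbors, card_disjSum, card_product,
      card_product, card_singleton, one_mul, Q.card_neighborFinset_eq_degree, card_univ,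
      Fintype.card_fin, card_filter_edgeSet_eq_card_filter_edgeFinset Q (a ∉ ·)]
  rw [degree_eq, ← card_filter_notMem_add_degree Q a]
  push_cast
  ring

theorem degree_inr_of_le [Fintype V] {h : Fin s} (e : Q.edgeSet) (hq : q ≤ h) :
    ((genTransMinus Q r s p q).degree (.inr (h, e)) : ℤ) =
      #Q.edgeFinset + r * ((Fintype.card V : ℤ) - 2) + 1 - edgeDegreeSum Q e := by
  classical
  obtain ⟨⟨u, v⟩, huv⟩ := e
  have neighbors : (genTransMinus Q r s p q).neighborFinset (.inr (h, ⟨s(u, v), huv⟩)) =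
      (univ ×ˢ ({u, v} : Finset V)ᶜ).disjSum
        ({h} ×ˢ ({f | u ∉ (f : Sym2 V) ∧ v ∉ (f : Sym2 V)} : Finset Q.edgeSet)) := by
    ext (⟨g, b⟩ | ⟨h', f⟩)
    · simp [SimpleGraph.adj_comm _ (Sum.inr _), adj_inl_inr]
    · simp [adj_inr_inr_of_le Q hq, and_comm]
  have degree_eq : (genTransMinus Q r s p q).degree (.inr (h, ⟨s(u, v), huv⟩)) =
      r * #({u, v} : Finset V)ᶜ + #{f ∈ Q.edgeFinset | u ∉ f ∧ v ∉ f} := by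
    rw [← SimpleGraph.card_neighborFinset_eq_degree, neighbors, card_disjSum, card_product,
      card_product, card_singleton, one_mul, card_univ, Fintype.card_fin,
      card_filter_edgeSet_eq_card_filter_edgeFinset Q fun f => u ∉ f ∧ v ∉ f]
  have card_off_edge : #({u, v} : Finset V)ᶜ + 2 = Fintype.card V := by
    rw [← card_pair (Q.ne_of_adj huv), card_compl_add_card]
  have card_disjoint_edges := card_filter_notMem_and_notMem_add_degree_add_degree Q huv
  rw [degree_eq, ← card_off_edge, edgeDegreeSum, Sym2.map_mk, Sym2.add_mk]
  zify at card_disjoint_edges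
  push_cast
  linear_combination card_disjoint_edges

end Degree

end genTransMinus

/-- First Zagreb index of `Q_{rs}^{+--}`, i.e. the case `p = r`, `q = 0`. -/
theorem zagrebM1_genTransMinus_pmm
    {V : Type*} [Fintype V] (Q : SimpleGraph V)
    (r s n m : ℕ) (hr : 0 < r) (hs : 0 < s)
    (hn : Fintype.card V = n) (hm : Q.edgeFinset.card = m) :
    (zagrebM1 (genTransMinus Q r s r 0) : ℤ) =
      ((r : ℤ) * (1 - (s : ℤ)) ^ 2
          - 2 * s * ((m : ℤ) + (r : ℤ) * ((n : ℤ) - 2) + 1)) * zagrebM1 Q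
      + 2 * s * zagrebM2 Q + s * forgottenF Q
      + (n : ℤ) * r * (m : ℤ) ^ 2 * (s : ℤ) ^ 2
      + 4 * r * s * (m : ℤ) ^ 2 * (1 - (s : ℤ))
      + (s : ℤ) * m * ((m : ℤ) + (r : ℤ) * ((n : ℤ) - 2) + 1) ^ 2 := by
  subst hn hm
  calc (zagrebM1 (genTransMinus Q r s r 0) : ℤ)
    _ = r * ∑ a, (s * #Q.edgeFinset + (1 - s) * Q.degree a : ℤ) ^ 2
        + s * ∑ e ∈ Q.edgeFinset,
            (#Q.edgeFinset + r * ((Fintype.card V : ℤ) - 2) + 1 - edgeDegreeSum Q e : ℤ) ^ 2 := by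
      simp only [zagrebM1, Nat.cast_add, Nat.cast_sum, Nat.cast_pow, Fintype.sum_sum_type,
        Fintype.sum_prod_type, genTransMinus.degree_inl_of_lt Q _ (Fin.is_lt _),
        genTransMinus.degree_inr_of_le Q _ (Nat.zero_le _), sum_const, card_univ,
        Fintype.card_fin, nsmul_eq_mul, SimpleGraph.edgeFinset, ← sum_set_coe]
    _ = _ := by
      rw [sum_sq_add_mul_degree, sum_edgeFinset_sq_sub_edgeDegreeSum,
        hyperZagreb_eq_forgottenF_add_two_mul_zagrebM2]
      push_cast
      ring
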